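/- Let (A,Λ) be an associative form ring with 1, n ≥ 3, and let (I,Γ), (J,Δ) be form ideals of (A,Λ). Suppose a ∈ I, b ∈ J, r ∈ A and i ≠ ±j. Then [T_ji(a), Z_ji(b,r)] ∈ [FU(2n,I,Γ), FU(2n,J,Δ)], where Z_ji(b,r) = T_ij(r)·T_ji(b)·T_ij(−r). -/

import Mathlib

open Matrix
open scoped commutatorElement

/-- Bak's form ring data on a ring `A`: an involution `bar`, a central symmetry
`λ` with `λ λ̄ = 1`, and a form parameter `Λ`. -/
structure FormRingData (A : Type*) [Ring A] where
  bar : A →+ A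
  bar_mul : ∀ a b : A, bar (a * b) = bar b * bar a
  bar_bar : ∀ a : A, bar (bar a) = a
  lam : A
  lam_comm : ∀ a : A, lam * a = a * lam
  lam_bar : lam * bar lam = 1
  Lambda : AddSubgroup A
  lambdaMin_mem : ∀ c : A, c - lam * bar c ∈ Lambda
  lambdaMax_mem : ∀ x ∈ Lambda, x = -(lam * bar x)
  lambda_conj : ∀ (c : A), ∀ x ∈ Lambda, c * x * bar c ∈ Lambda

namespace FormRingData

variable {A : Type*} [Ring A]

/-- Integral powers of the symmetry `λ`; negative powers use `λ̄ = λ⁻¹`. -/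
def lpow (D : FormRingData A) (k : ℤ) : A :=
  if 0 ≤ k then D.lam ^ k.toNat else (D.bar D.lam) ^ (-k).toNat

end FormRingData

/-- The index set `Ω = {1,…,n,−n,…,−1}`, coded as `Fin n × Bool`
(second component `true` = positive index). -/
abbrev Idx (n : ℕ) := Fin n × Bool

namespace Idx

/-- The involution `i ↦ −i` on indices. -/
def neg {n : ℕ} (i : Idx n) : Idx n := (i.1, !i.2)

/-- The sign `ε(i) ∈ {±1}`. -/
def eps {n : ℕ} (i : Idx n) : ℤ := if i.2 then 1 else -1

theorem neg_ne {n : ℕ} (i : Idx n) : neg i ≠ i := by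
  simp [neg, Prod.ext_iff]

theorem neg_injective {n : ℕ} : Function.Injective (neg (n := n)) := by
  intro i j h
  simp only [neg, Prod.mk.injEq] at h
  refine Prod.ext h.1 ?_
  have h2 := h.2
  cases hi : i.2 <;> cases hj : j.2 <;> simp_all

theorem neg_neg {n : ℕ} (i : Idx n) : neg (neg i) = i := by
  simp [neg]

end Idx

/-- `GL(2n, A)`, realised as the units of the `Ω × Ω` matrix ring over `A`. -/
abbrev GLn (A : Type*) [Ring A] (n : ℕ) := (Matrix (Idx n) (Idx n) A)ˣ

section aux

theorem one_add_mul_one_sub {R : Type*} [Ring R] {X : R} (h : X * X = 0) :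
    (1 + X) * (1 - X) = 1 := by
  have hh : (1 + X) * (1 - X) = 1 - X * X := by noncomm_ring
  rw [hh, h, sub_zero]

theorem one_sub_mul_one_add {R : Type*} [Ring R] {X : R} (h : X * X = 0) :
    (1 - X) * (1 + X) = 1 := by
  have hh : (1 - X) * (1 + X) = 1 - X * X := by noncomm_ring
  rw [hh, h, sub_zero]

theorem stdBasisMatrix_neg' {A : Type*} [Ring A] {n : ℕ} (i j : Idx n) (c : A) :
    single i j (-c) = -single i j c := by
  refine eq_neg_of_add_eq_zero_left ?_
  rw [← Matrix.single_add]
  simp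

end aux

namespace FormRingData

variable {A : Type*} [Ring A] {n : ℕ}

/-- The off-diagonal part of a short root element. -/
def Xmat (D : FormRingData A) (i j : Idx n) (c : A) : Matrix (Idx n) (Idx n) A :=
  single i j c -
    single (Idx.neg j) (Idx.neg i) (D.lpow ((Idx.eps j - Idx.eps i) / 2) * D.bar c)

theorem Xmat_mul (D : FormRingData A) {i j : Idx n} (hij : i ≠ j) (c c' : A) :
    D.Xmat i j c * D.Xmat i j c' = 0 := by
  unfold Xmat
  rw [sub_mul, mul_sub, mul_sub,
    Matrix.single_mul_single_of_ne _ _ _ _ (Ne.symm hij),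
    Matrix.single_mul_single_of_ne _ _ _ _ (Ne.symm (Idx.neg_ne j)),
    Matrix.single_mul_single_of_ne _ _ _ _ (Idx.neg_ne i),
    Matrix.single_mul_single_of_ne _ _ _ _ (fun h => hij (Idx.neg_injective h))]
  simp

theorem Xmat_neg (D : FormRingData A) (i j : Idx n) (c : A) :
    D.Xmat i j (-c) = -D.Xmat i j c := by
  unfold Xmat
  rw [map_neg, mul_neg, stdBasisMatrix_neg', stdBasisMatrix_neg']
  abel

/-- The elementary short root unipotent `T_{ij}(c)`, for `i ≠ ±j`
(with junk value `1` when `i = j`). -/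
def TS (D : FormRingData A) (i j : Idx n) (c : A) : GLn A n :=
  if h : i = j then 1 else
    { val := 1 + D.Xmat i j c
      inv := 1 + D.Xmat i j (-c)
      val_inv := by
        rw [D.Xmat_neg, ← sub_eq_add_neg]
        exact one_add_mul_one_sub (D.Xmat_mul h c c)
      inv_val := by
        rw [D.Xmat_neg, ← sub_eq_add_neg]
        exact one_sub_mul_one_add (D.Xmat_mul h c c) }

/-- The elementary long root unipotent `T_{i,−i}(c)`. -/
def TL (D : FormRingData A) (i : Idx n) (c : A) : GLn A n where
  val := 1 + single i (Idx.neg i) c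
  inv := 1 + single i (Idx.neg i) (-c)
  val_inv := by
    rw [stdBasisMatrix_neg', ← sub_eq_add_neg]
    exact one_add_mul_one_sub (Matrix.single_mul_single_of_ne _ _ _ _ (Idx.neg_ne i) _)
  inv_val := by
    rw [stdBasisMatrix_neg', ← sub_eq_add_neg]
    exact one_sub_mul_one_add (Matrix.single_mul_single_of_ne _ _ _ _ (Idx.neg_ne i) _)

/-- The elementary unitary transvection `T_{ij}(c)` (long or short root type
according to whether `j = −i`). -/
def T (D : FormRingData A) (i j : Idx n) (c : A) : GLn A n :=
  if j = Idx.neg i then D.TL i c else D.TS i j c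

/-- The elementary commutator `Y_{ij}(a,b) = [T_{ij}(a), T_{ji}(b)]`. -/
def Y (D : FormRingData A) (i j : Idx n) (a b : A) : GLn A n :=
  ⁅D.T i j a, D.T j i b⁆

/-- The elementary conjugate `Z_{ij}(a,c) = T_{ji}(c) T_{ij}(a) T_{ji}(−c)`. -/
def Z (D : FormRingData A) (i j : Idx n) (a c : A) : GLn A n :=
  D.T j i c * D.T i j a * D.T j i (-c)

/-- The set of elementary unitary transvections of level `(I,Γ)`. -/
def transvGen (D : FormRingData A) (n : ℕ) (I Γ : AddSubgroup A) : Set (GLn A n) :=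
  {x | ∃ i j : Idx n, i ≠ j ∧ i ≠ Idx.neg j ∧ ∃ c ∈ I, x = D.TS i j c} ∪
    {x | ∃ i : Idx n, ∃ g ∈ Γ, x = D.TL i (D.lpow (-(Idx.eps i + 1) / 2) * g)}

/-- The unrelative elementary subgroup `FU(2n, I, Γ)`. -/
def FU (D : FormRingData A) (n : ℕ) (I Γ : AddSubgroup A) : Subgroup (GLn A n) :=
  Subgroup.closure (D.transvGen n I Γ)

/-- The absolute elementary unitary group `EU(2n, A, Λ)`. -/
def EUmax (D : FormRingData A) (n : ℕ) : Subgroup (GLn A n) :=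
  D.FU n ⊤ D.Lambda

/-- The relative elementary subgroup `EU(2n, I, Γ)`: the normal closure of
`FU(2n, I, Γ)` in `EU(2n, A, Λ)`. -/
def EU (D : FormRingData A) (n : ℕ) (I Γ : AddSubgroup A) : Subgroup (GLn A n) :=
  Subgroup.closure {x | ∃ g ∈ D.EUmax n, ∃ t ∈ D.transvGen n I Γ, x = g * t * g⁻¹}

/-- The additive subgroup generated by products `st`, `s ∈ S`, `t ∈ T`. -/
def mulSub (S T : AddSubgroup A) : AddSubgroup A :=
  AddSubgroup.closure {x | ∃ a ∈ S, ∃ b ∈ T, x = a * b}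

/-- The symmetrised product `ST + TS` of two (additive subgroups underlying)
two-sided ideals. -/
def symI (S T : AddSubgroup A) : AddSubgroup A :=
  mulSub S T ⊔ mulSub T S

/-- The minimal relative form parameter `Γ_min(K)` of level `K`. -/
def gammaMin (D : FormRingData A) (K : AddSubgroup A) : AddSubgroup A :=
  AddSubgroup.closure
    ({x | ∃ a ∈ K, x = a - D.lam * D.bar a} ∪
      {x | ∃ a ∈ K, ∃ c ∈ D.Lambda, x = a * c * D.bar a})

/-- The relative form parameter `ˢΓ = ⟨ b γ b̄ ∣ b ∈ S, γ ∈ Γ ⟩`. -/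
def conjPar (D : FormRingData A) (S Γ : AddSubgroup A) : AddSubgroup A :=
  AddSubgroup.closure {x | ∃ b ∈ S, ∃ g ∈ Γ, x = b * g * D.bar b}

/-- The relative form parameter of the symmetrised product
`(I,Γ)∘(J,Δ) = (IJ+JI, Γ_min(IJ+JI) + ᴶΓ + ᴵΔ)`. -/
def symG (D : FormRingData A) (I Γ J Δ : AddSubgroup A) : AddSubgroup A :=
  D.gammaMin (symI I J) ⊔ D.conjPar J Γ ⊔ D.conjPar I Δ

/-- The elementary subgroup `EU(2n, (I,Γ)∘(J,Δ))` of the symmetrised product. -/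
def EUsym (D : FormRingData A) (n : ℕ) (I Γ J Δ : AddSubgroup A) : Subgroup (GLn A n) :=
  D.EU n (symI I J) (D.symG I Γ J Δ)

/-- Position-dependent membership `a ∈ (I,Γ)` at position `(i,j)`:
`a ∈ I` for a short root position, `a ∈ λ^{−(ε(i)+1)/2}Γ` for a long one. -/
def pmem (D : FormRingData A) (I Γ : AddSubgroup A) {n : ℕ} (i j : Idx n) (a : A) : Prop :=
  if j = Idx.neg i then ∃ g ∈ Γ, a = D.lpow (-(Idx.eps i + 1) / 2) * g else a ∈ I

end FormRingData

/-- A form ideal `(I,Γ)` of the form ring `(A,Λ)`. -/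
structure FormIdeal {A : Type*} [Ring A] (D : FormRingData A) where
  I : AddSubgroup A
  Gamma : AddSubgroup A
  mul_mem_left : ∀ (c : A), ∀ x ∈ I, c * x ∈ I
  mul_mem_right : ∀ (c : A), ∀ x ∈ I, x * c ∈ I
  bar_mem : ∀ x ∈ I, D.bar x ∈ I
  gammaMin_le : D.gammaMin I ≤ Gamma
  gamma_le_I : Gamma ≤ I
  gamma_le_Lambda : Gamma ≤ D.Lambda
  gamma_conj : ∀ (c : A), ∀ x ∈ Gamma, c * x * D.bar c ∈ Gamma

/-! Choosing a sign for every `p ∈ {1, …, n}` in such a way that `i` and `j` are among the chosen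
indices turns the short root elements into a family `t` satisfying the linear Steinberg relations.
For such a family, let `E` be the relative elementary subgroup of level `K = IJ + JI`. Since there
is always a third index, `E` is normalized by all root elements, and it lies in `[F(I), F(J)]`
because `t_pq(ab) = [t_pm(a), t_mq(b)]`. It therefore suffices to compute modulo `E`, that is, as
if root elements of level `K` were trivial. The conjugate `z = t_ij(r) t_ji(b) t_ij(-r)` equals
`[u, v]` with `u = t_ik(rb) t_jk(b)` and `v = t_kj(-r) t_ki(1)`. Conjugation by `t_ji(a)` fixes `u`
and replaces `v` by `t_ki(ra) v`; as `t_ki(ra)` centralizes `z`, this gives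
`[t_ji(a), z] = [t_ik(rb), t_ki(ra)]`, which is visibly in `[F(I), F(J)]`. -/

instance isTwoSided_sup {A : Type*} [Ring A] {I J : Ideal A} [I.IsTwoSided] [J.IsTwoSided] :
    (I ⊔ J).IsTwoSided where
  mul_mem_of_left c hxy := by
    obtain ⟨x, hx, y, hy, rfl⟩ := Submodule.mem_sup.1 hxy
    rw [add_mul]
    exact Submodule.add_mem_sup (I.mul_mem_right c hx) (J.mul_mem_right c hy)

/-- A family of root elements `t p q a` satisfying the Steinberg relations of type `A`. Diagonal
positions carry no root; the convention `t p p a = 1` there lets the relations that remain true be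
stated without the side condition `p ≠ q`. -/
structure IsSteinbergFamily {ι A G : Type*} [Ring A] [Group G] (t : ι → ι → A → G) : Prop where
  diag : ∀ p a, t p p a = 1
  add : ∀ p q a b, t p q (a + b) = t p q a * t p q b
  commute : ∀ {p q r s}, p ≠ s → q ≠ r → ∀ a b, Commute (t p q a) (t r s b)
  commutator : ∀ {p q r}, p ≠ q → q ≠ r → p ≠ r → ∀ a b, ⁅t p q a, t q r b⁆ = t p r (a * b)

/-- The unrelative elementary subgroup of level `I`, generated by the root elements of level `I`. -/
def unrelativeElementary {ι A G : Type*} [Ring A] [Group G] (t : ι → ι → A → G) (I : Ideal A) :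
    Subgroup G :=
  Subgroup.closure {x | ∃ p q, ∃ c ∈ I, x = t p q c}

/-- The subgroup generated by the elementary conjugates `t q p r * t p q c * (t q p r)⁻¹` of level
`I`. For two-sided `I` and at least three indices it is the relative elementary subgroup. -/
def relativeElementary {ι A G : Type*} [Ring A] [Group G] (t : ι → ι → A → G) (I : Ideal A) :
    Subgroup G :=
  Subgroup.closure {x | ∃ p q, ∃ c ∈ I, ∃ r, x = MulAut.conj (t q p r) (t p q c)}

namespace IsSteinbergFamily

open MulAut (conj)

variable {ι A G : Type*} [Ring A] [Group G] {t : ι → ι → A → G} {I J K : Ideal A} {p q m : ι}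

theorem zero (h : IsSteinbergFamily t) (p q : ι) : t p q 0 = 1 := by
  simpa using h.add p q 0 0

theorem neg (h : IsSteinbergFamily t) (p q : ι) (a : A) : t p q (-a) = (t p q a)⁻¹ := by
  rw [eq_inv_iff_mul_eq_one, ← h.add, neg_add_cancel, h.zero]

theorem map {G' : Type*} [Group G'] (h : IsSteinbergFamily t) (f : G →* G') :
    IsSteinbergFamily fun p q a ↦ f (t p q a) where
  diag p a := by rw [h.diag, map_one]
  add p q a b := by rw [h.add, map_mul]
  commute hps hqr a b := (h.commute hps hqr a b).map f
  commutator hpq hqr hpr a b := by rw [← map_commutatorElement, h.commutator hpq hqr hpr]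

theorem codRestrict (h : IsSteinbergFamily t) {N : Subgroup G} (hN : ∀ p q a, t p q a ∈ N) :
    IsSteinbergFamily fun p q a ↦ (⟨t p q a, hN p q a⟩ : N) where
  diag p a := Subtype.ext (h.diag p a)
  add p q a b := Subtype.ext (h.add p q a b)
  commute hps hqr a b := Subtype.ext (h.commute hps hqr a b)
  commutator hpq hqr hpr a b := Subtype.ext (h.commutator hpq hqr hpr a b)

theorem conj_of_ne (h : IsSteinbergFamily t) {p q r s : ι} (hps : p ≠ s) (hqr : q ≠ r) (a b : A) :
    conj (t p q a) (t r s b) = t r s b :=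
  (h.commute hps hqr a b).mul_inv_cancel

theorem conj_left (h : IsSteinbergFamily t) (hpq : p ≠ q) (hqm : q ≠ m) (hpm : p ≠ m) (a b : A) :
    conj (t p q a) (t q m b) = t p m (a * b) * t q m b := by
  rw [conj_eq_commutatorElement_mul, h.commutator hpq hqm hpm]

theorem conj_right (h : IsSteinbergFamily t) (hpq : p ≠ q) (hqm : q ≠ m) (hpm : p ≠ m) (a b : A) :
    conj (t q m b) (t p q a) = t p m (-(a * b)) * t p q a := by
  rw [conj_eq_commutatorElement_mul, ← commutatorElement_inv, h.commutator hpq hqm hpm, h.neg]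

theorem conj_conj (h : IsSteinbergFamily t) (p q k l : ι) (r s : A) (x : G) :
    conj (t k l s) (conj (t p q r) x) = conj (t p q r) (conj (conj (t p q (-r)) (t k l s)) x) := by
  simp [h.neg, mul_assoc]

theorem mem_unrelativeElementary {c : A} (hc : c ∈ I) : t p q c ∈ unrelativeElementary t I :=
  Subgroup.subset_closure ⟨p, q, c, hc, rfl⟩

theorem conj_mem_relativeElementary {c : A} (hc : c ∈ I) (r : A) :
    conj (t q p r) (t p q c) ∈ relativeElementary t I :=
  Subgroup.subset_closure ⟨p, q, c, hc, r, rfl⟩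

theorem unrelativeElementary_le_relativeElementary (h : IsSteinbergFamily t) (I : Ideal A) :
    unrelativeElementary t I ≤ relativeElementary t I := by
  refine (Subgroup.closure_le _).2 ?_
  rintro _ ⟨p, q, c, hc, rfl⟩
  simpa [h.zero] using conj_mem_relativeElementary (t := t) (p := p) (q := q) hc 0

section Normality

variable [K.IsTwoSided] {k l : ι} {c : A}

theorem conj_mem_unrelativeElementary (h : IsSteinbergFamily t) (hpq : p ≠ q) (hkl : k ≠ l)
    (hopp : ¬(k = q ∧ l = p)) (hc : c ∈ K) (s : A) :
    conj (t k l s) (t p q c) ∈ unrelativeElementary t K := by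
  rcases eq_or_ne l p with rfl | hlp
  · rw [h.conj_left hkl hpq (by tauto)]
    exact mul_mem (mem_unrelativeElementary (K.mul_mem_left _ hc)) (mem_unrelativeElementary hc)
  rcases eq_or_ne k q with rfl | hkq
  · rw [h.conj_right hpq hkl hlp.symm]
    exact mul_mem (mem_unrelativeElementary (neg_mem (K.mul_mem_right _ hc)))
      (mem_unrelativeElementary hc)
  · rw [h.conj_of_ne hkq hlp]
    exact mem_unrelativeElementary hc

theorem conj_mem_relativeElementary_of_mem_unrelativeElementary (h : IsSteinbergFamily t)
    (hkl : k ≠ l) (s : A) {x : G} (hx : x ∈ unrelativeElementary t K) :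
    conj (t k l s) x ∈ relativeElementary t K := by
  suffices unrelativeElementary t K ≤ (relativeElementary t K).comap (conj (t k l s)).toMonoidHom
    from this hx
  refine (Subgroup.closure_le _).2 ?_
  rintro _ ⟨p, q, c, hc, rfl⟩
  rcases eq_or_ne p q with rfl | hpq
  · simp [h.diag]
  by_cases hopp : k = q ∧ l = p
  · obtain ⟨rfl, rfl⟩ := hopp
    exact conj_mem_relativeElementary hc s
  · exact h.unrelativeElementary_le_relativeElementary K
      (h.conj_mem_unrelativeElementary hpq hkl hopp hc s)

theorem conj_conj_mem_relativeElementary_of_ne (h : IsSteinbergFamily t) (hpq : p ≠ q)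
    (hkl : k ≠ l) (hne : ¬(k = p ∧ l = q)) (hc : c ∈ K) (r s : A) :
    conj (t k l s) (conj (t q p r) (t p q c)) ∈ relativeElementary t K := by
  by_cases hopp : k = q ∧ l = p
  · obtain ⟨rfl, rfl⟩ := hopp
    rw [← MulAut.mul_apply, ← map_mul, ← h.add]
    exact conj_mem_relativeElementary hc _
  rw [h.conj_conj]
  refine h.conj_mem_relativeElementary_of_mem_unrelativeElementary hpq.symm r ?_
  rcases eq_or_ne l q with rfl | hlq
  · rw [h.conj_right hkl hpq.symm (by tauto), map_mul, MulAut.mul_apply,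
      h.conj_of_ne hkl hpq.symm]
    exact h.conj_mem_unrelativeElementary hpq (by tauto) (by tauto) hc _
  rcases eq_or_ne k p with rfl | hkp
  · rw [h.conj_left hpq.symm hkl hlq.symm, map_mul, MulAut.mul_apply, h.conj_of_ne hpq hkl.symm]
    exact h.conj_mem_unrelativeElementary hpq hlq.symm (by tauto) hc _
  · rw [h.conj_of_ne hlq.symm hkp.symm]
    exact h.conj_mem_unrelativeElementary hpq hkl hopp hc s

theorem conj_mul_mem_relativeElementary (h : IsSteinbergFamily t) (hpq : p ≠ q) (hqm : q ≠ m)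
    (hpm : p ≠ m) (hc : c ∈ K) (x y : A) :
    conj (t m p x * t m q y) (t p m c) ∈ relativeElementary t K := by
  rw [map_mul, MulAut.mul_apply, h.conj_right hpm hqm.symm hpq, map_mul]
  exact mul_mem
    (h.conj_mem_relativeElementary_of_mem_unrelativeElementary hpm.symm _
      (mem_unrelativeElementary (neg_mem (K.mul_mem_right _ hc))))
    (conj_mem_relativeElementary hc x)

/- Writing `c = c * 1` turns `t p q c` into a commutator through a third index `m`, after which all
conjugations take place in the unipotent radicals of column `m` and row `m`. -/
theorem conj_conj_mem_relativeElementary_self (h : IsSteinbergFamily t) (hpq : p ≠ q) (hqm : q ≠ m)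
    (hpm : p ≠ m) (hc : c ∈ K) (r s : A) :
    conj (t p q s) (conj (t q p r) (t p q c)) ∈ relativeElementary t K := by
  set φ : G →* G := (conj (t p q s * t q p r)).toMonoidHom with hφ
  have hφ_apply (x : G) : φ x = conj (t p q s) (conj (t q p r) x) := by simp [hφ]
  have hu : φ (t p m c) = t p m (s * (r * c)) * t q m (r * c) * t p m c := by
    rw [hφ_apply, h.conj_left hpq.symm hpm hqm, map_mul, h.conj_left hpq hqm hpm,
      h.conj_of_ne hpm hpq.symm]
  obtain ⟨x, y, hv⟩ : ∃ x y, φ (t m q 1) = t m q x * t m p y := by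
    refine ⟨r * s + 1, -r, ?_⟩
    rw [hφ_apply, h.conj_right hqm.symm hpq.symm hpm.symm, map_mul,
      h.conj_right hpm.symm hpq hqm.symm, h.conj_of_ne hpq hqm]
    simp only [one_mul, neg_mul, neg_neg]
    rw [h.add, mul_assoc, mul_assoc, (h.commute hqm.symm hpm (-r) 1).eq]
  have hv' : φ (t m q 1) = t m p y * t m q x := by
    rw [hv, (h.commute hqm.symm hpm _ _).eq]
  have hrc : r * c ∈ K := K.mul_mem_left r hc
  have hsrc : s * (r * c) ∈ K := K.mul_mem_left s hrc
  have hp {d : A} (hd : d ∈ K) : conj (φ (t m q 1)) (t p m d) ∈ relativeElementary t K := by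
    rw [hv']
    exact h.conj_mul_mem_relativeElementary hpq hqm hpm hd y x
  have hq : conj (φ (t m q 1)) (t q m (r * c)) ∈ relativeElementary t K := by
    rw [hv]
    exact h.conj_mul_mem_relativeElementary hpq.symm hpm hqm hrc x y
  have hsplit : φ (t p q c) = φ (t p m c) * (conj (φ (t m q 1)) (φ (t p m c)))⁻¹ := by
    rw [← mul_one c, ← h.commutator hpm hqm.symm hpq, map_commutatorElement, mul_one]
    simp [commutatorElement_def, mul_assoc]
  rw [← hφ_apply, hsplit, hu]
  have hK {p q : ι} {d : A} (hd : d ∈ K) : t p q d ∈ relativeElementary t K :=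
    h.unrelativeElementary_le_relativeElementary K (mem_unrelativeElementary hd)
  refine mul_mem (mul_mem (mul_mem (hK hsrc) (hK hrc)) (hK hc)) (inv_mem ?_)
  rw [map_mul, map_mul]
  exact mul_mem (mul_mem (hp hsrc) hq) (hp hc)

theorem conj_mem_relativeElementary_of_mem (h : IsSteinbergFamily t)
    (hι : ∀ p q : ι, ∃ m, m ≠ p ∧ m ≠ q) (k l : ι) (s : A) {x : G}
    (hx : x ∈ relativeElementary t K) : conj (t k l s) x ∈ relativeElementary t K := by
  rcases eq_or_ne k l with rfl | hkl
  · simpa [h.diag] using hx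
  suffices relativeElementary t K ≤ (relativeElementary t K).comap (conj (t k l s)).toMonoidHom
    from this hx
  refine (Subgroup.closure_le _).2 ?_
  rintro _ ⟨p, q, c, hc, r, rfl⟩
  rcases eq_or_ne p q with rfl | hpq
  · simp [h.diag]
  by_cases hself : k = p ∧ l = q
  · obtain ⟨rfl, rfl⟩ := hself
    obtain ⟨m, hmk, hml⟩ := hι k l
    exact h.conj_conj_mem_relativeElementary_self hkl hml.symm hmk.symm hc r s
  · exact h.conj_conj_mem_relativeElementary_of_ne hpq hkl hself hc r s

theorem mem_normalizer_relativeElementary (h : IsSteinbergFamily t)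
    (hι : ∀ p q : ι, ∃ m, m ≠ p ∧ m ≠ q) (k l : ι) (s : A) :
    t k l s ∈ Subgroup.normalizer (relativeElementary t K : Set G) := by
  refine Subgroup.mem_normalizer_iff.2 fun x ↦
    ⟨h.conj_mem_relativeElementary_of_mem hι k l s, fun hx ↦ ?_⟩
  simpa [h.neg, mul_assoc] using h.conj_mem_relativeElementary_of_mem hι k l (-s) hx

end Normality

theorem conj_mem_commutator (h : IsSteinbergFamily t) (hι : ∀ p q : ι, ∃ m, m ≠ p ∧ m ≠ q)
    [J.IsTwoSided] (p q : ι) {c : A} (hc : c ∈ I * J) (r : A) :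
    conj (t q p r) (t p q c) ∈ ⁅unrelativeElementary t I, unrelativeElementary t J⁆ := by
  rcases eq_or_ne p q with rfl | hpq
  · simp [h.diag]
  obtain ⟨m, hmp, hmq⟩ := hι p q
  induction hc using Submodule.mul_induction_on' with
  | mem_mul_mem a ha b hb =>
    rw [← h.commutator hmp.symm hmq hpq, map_commutatorElement]
    refine Subgroup.commutator_mem_commutator ?_ ?_
    · rw [h.conj_left hpq.symm hmp.symm hmq.symm]
      exact mul_mem (mem_unrelativeElementary (I.mul_mem_left _ ha)) (mem_unrelativeElementary ha)
    · rw [h.conj_right hmq hpq.symm hmp]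
      exact mul_mem (mem_unrelativeElementary (neg_mem (J.mul_mem_right _ hb)))
        (mem_unrelativeElementary hb)
  | add c _ d _ hc hd =>
    rw [h.add, map_mul]
    exact mul_mem hc hd

theorem relativeElementary_mul_sup_mul_le_commutator (h : IsSteinbergFamily t)
    (hι : ∀ p q : ι, ∃ m, m ≠ p ∧ m ≠ q) (I J : Ideal A) [I.IsTwoSided] [J.IsTwoSided] :
    relativeElementary t (I * J ⊔ J * I) ≤
      ⁅unrelativeElementary t I, unrelativeElementary t J⁆ := by
  refine (Subgroup.closure_le _).2 ?_
  rintro _ ⟨p, q, c, hc, r, rfl⟩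
  obtain ⟨x, hx, y, hy, rfl⟩ := Submodule.mem_sup.1 hc
  rw [h.add, map_mul]
  refine mul_mem (h.conj_mem_commutator hι p q hx r) ?_
  rw [Subgroup.commutator_comm]
  exact h.conj_mem_commutator hι p q hy r

theorem commutator_conj_eq_of_eq_one (h : IsSteinbergFamily t)
    (hK : ∀ p q, ∀ c ∈ K, t p q c = 1) {a b : A} (hab : ∀ s, a * s * b ∈ K)
    (hba : ∀ s, b * s * a ∈ K) {i j k : ι} (hij : i ≠ j) (hik : i ≠ k) (hjk : j ≠ k) (r : A) :
    ⁅t j i a, conj (t i j r) (t j i b)⁆ = ⁅t i k (r * b), t k i (r * a)⁆ := by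
  have hrarb : r * a * r * b ∈ K := by
    simpa only [mul_assoc] using K.mul_mem_left r (hab r)
  set x := t j i a
  set z := conj (t i j r) (t j i b) with hz
  set u := t i k (r * b) * t j k b with hu
  set v := t k j (-r) * t k i 1 with hv
  set w := t k i (r * a)
  have hzuv : z = ⁅u, v⁆ := by
    rw [hz, ← mul_one b, ← h.commutator hjk hik.symm hij.symm, map_commutatorElement,
      h.conj_left hij hjk hik, h.conj_right hik.symm hij hjk.symm, one_mul]
  have hxu : conj x u = u := by
    rw [hu, map_mul, h.conj_left hij.symm hik hjk, h.conj_of_ne hjk hij, ← mul_assoc a r b,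
      hK j k _ (hab r), one_mul]
  have hxv : conj x v = w * v := by
    rw [hv, map_mul, h.conj_right hjk.symm hij.symm hik.symm, h.conj_of_ne hij.symm hik, neg_mul,
      neg_neg, mul_assoc]
  have hwz : conj w z = z := by
    rw [h.conj_conj, h.conj_right hik.symm hij hjk.symm, map_mul, MulAut.mul_apply,
      h.conj_of_ne hik.symm hij, h.conj_left hjk.symm hij.symm hik.symm, mul_neg, neg_neg,
      hK k i _ hrarb, one_mul]
  have hwb : Commute w (t j k b) := by
    rw [← commutatorElement_eq_one_iff_commute, ← commutatorElement_inv,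
      h.commutator hjk hik.symm hij.symm, ← mul_assoc, hK j i _ (hba r), inv_one]
  have hxz : conj x z = ⁅u, w⁆ * z := by
    rw [hzuv, map_commutatorElement, hxu, hxv, commutatorElement_mul_right_eq_mul_conj, ← hzuv,
      mul_assoc, mul_assoc, ← mul_assoc w]
    exact congrArg _ hwz
  calc ⁅x, z⁆ = ⁅u, w⁆ := by
        rw [← mul_left_inj z, ← conj_eq_commutatorElement_mul, hxz]
    _ = ⁅t i k (r * b), w⁆ := by
        rw [hu, commutatorElement_mul_left_eq_conj_mul, hwb.symm.commutator_eq, mul_one,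
          mul_inv_cancel, one_mul]

theorem inv_commutator_conj_mul_mem_relativeElementary (h : IsSteinbergFamily t)
    (hι : ∀ p q : ι, ∃ m, m ≠ p ∧ m ≠ q) [K.IsTwoSided] {a b : A} (hab : ∀ s, a * s * b ∈ K)
    (hba : ∀ s, b * s * a ∈ K) {i j k : ι} (hij : i ≠ j) (hik : i ≠ k) (hjk : j ≠ k) (r : A) :
    ⁅t j i a, conj (t i j r) (t j i b)⁆⁻¹ * ⁅t i k (r * b), t k i (r * a)⁆ ∈
      relativeElementary t K := by
  set N := Subgroup.normalizer (relativeElementary t K : Set G)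
  have hu := h.codRestrict (N := N) (h.mem_normalizer_relativeElementary hι)
  set u : ι → ι → A → N := fun p q c ↦ ⟨t p q c, h.mem_normalizer_relativeElementary hι p q c⟩
  set π := QuotientGroup.mk' ((relativeElementary t K).subgroupOf N)
  have hK : ∀ p q, ∀ c ∈ K, π (u p q c) = 1 := fun p q c hc ↦
    (QuotientGroup.eq_one_iff _).2
      (h.unrelativeElementary_le_relativeElementary K (mem_unrelativeElementary hc))
  have heq : π ⁅u j i a, conj (u i j r) (u j i b)⁆ = π ⁅u i k (r * b), u k i (r * a)⁆ := by
    simpa only [map_commutatorElement, MulAut.conj_apply, map_mul, map_inv] using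
      (hu.map π).commutator_conj_eq_of_eq_one hK hab hba hij hik hjk r
  exact Subgroup.mem_subgroupOf.1 (QuotientGroup.eq.1 heq)

theorem commutator_conj_mem (h : IsSteinbergFamily t) (hι : ∀ p q : ι, ∃ m, m ≠ p ∧ m ≠ q)
    [I.IsTwoSided] [J.IsTwoSided] {i j : ι} (hij : i ≠ j) {a b : A} (ha : a ∈ I) (hb : b ∈ J)
    (r : A) :
    ⁅t j i a, conj (t i j r) (t j i b)⁆ ∈
      ⁅unrelativeElementary t I, unrelativeElementary t J⁆ := by
  obtain ⟨k, hki, hkj⟩ := hι i j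
  have hab : ∀ s, a * s * b ∈ I * J ⊔ J * I := fun s ↦
    Ideal.mem_sup_left (Ideal.mul_mem_mul (I.mul_mem_right s ha) hb)
  have hba : ∀ s, b * s * a ∈ I * J ⊔ J * I := fun s ↦
    Ideal.mem_sup_right (Ideal.mul_mem_mul (J.mul_mem_right s hb) ha)
  have hik : ⁅t i k (r * b), t k i (r * a)⁆ ∈
      ⁅unrelativeElementary t I, unrelativeElementary t J⁆ := by
    rw [Subgroup.commutator_comm]
    exact Subgroup.commutator_mem_commutator (mem_unrelativeElementary (J.mul_mem_left r hb))
      (mem_unrelativeElementary (I.mul_mem_left r ha))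
  have hmod := h.relativeElementary_mul_sup_mul_le_commutator hι I J
    (h.inv_commutator_conj_mul_mem_relativeElementary hι hab hba hij hki.symm hkj.symm r)
  exact inv_mem_iff.1 ((Subgroup.mul_mem_cancel_right _ hik).1 hmod)

end IsSteinbergFamily

namespace Idx

variable {n : ℕ}

theorem fst_ne_fst {i j : Idx n} (hij : i ≠ j) (hij' : i ≠ neg j) : i.1 ≠ j.1 := by
  intro h
  rcases Bool.eq_or_eq_not i.2 j.2 with hs | hs
  · exact hij (Prod.ext h hs)
  · exact hij' (Prod.ext h hs)

theorem ne_neg_comm {i j : Idx n} : i ≠ neg j ↔ j ≠ neg i :=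
  not_congr ⟨fun h ↦ by rw [h, neg_neg], fun h ↦ by rw [h, neg_neg]⟩

theorem mk_ne_neg_mk (s : Fin n → Bool) (p q : Fin n) : (p, s p) ≠ neg (q, s q) := by
  intro h
  obtain ⟨rfl, hs⟩ := Prod.mk.inj h
  simp at hs

theorem half_eps_sub_add_half_eps_sub (i j k : Idx n) :
    (eps k - eps j) / 2 + (eps j - eps i) / 2 = (eps k - eps i) / 2 := by
  unfold eps
  split_ifs <;> rfl

end Idx

namespace FormRingData

variable {A : Type*} [Ring A] {n : ℕ} (D : FormRingData A)

theorem bar_lam_mul_lam : D.bar D.lam * D.lam = 1 := by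
  rw [← D.lam_comm, D.lam_bar]

/-- The symmetry `λ` as a unit, with inverse `λ̄`. -/
def lamUnit : Aˣ := ⟨D.lam, D.bar D.lam, D.lam_bar, D.bar_lam_mul_lam⟩

theorem lpow_eq_zpow (k : ℤ) : D.lpow k = ((D.lamUnit ^ k : Aˣ) : A) := by
  rcases le_or_gt 0 k with hk | hk
  · lift k to ℕ using hk
    simp [lpow, lamUnit]
  · obtain ⟨m, rfl⟩ := Int.exists_eq_neg_ofNat hk.le
    rw [lpow, if_neg hk.not_ge]
    simp [lamUnit]

theorem lpow_add (k l : ℤ) : D.lpow (k + l) = D.lpow k * D.lpow l := by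
  simp only [lpow_eq_zpow, _root_.zpow_add, Units.val_mul]

theorem lpow_commute (k : ℤ) (a : A) : Commute (D.lpow k) a := by
  rw [lpow_eq_zpow]
  exact (Commute.units_zpow_right (u := D.lamUnit) (D.lam_comm a).symm k).symm

theorem lpow_mul_bar_mul_lpow_mul_bar (k l : ℤ) (a b : A) :
    D.lpow k * D.bar b * (D.lpow l * D.bar a) = D.lpow (k + l) * D.bar (a * b) := by
  rw [D.lpow_add, D.bar_mul, mul_assoc, ← mul_assoc (D.bar b), ← (D.lpow_commute l _).eq, mul_assoc,
    mul_assoc]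

theorem Xmat_add (i j : Idx n) (a b : A) : D.Xmat i j (a + b) = D.Xmat i j a + D.Xmat i j b := by
  simp only [Xmat, map_add, mul_add, single_add]
  abel

theorem Xmat_mul_Xmat_eq_zero {i j k l : Idx n} (hjk : j ≠ k) (hil : i ≠ l) (hjl : j ≠ Idx.neg l)
    (hik : i ≠ Idx.neg k) (a b : A) : D.Xmat i j a * D.Xmat k l b = 0 := by
  simp only [Xmat, sub_mul, mul_sub, single_mul_single_of_ne _ _ _ _ hjk,
    single_mul_single_of_ne _ _ _ _ hjl,
    single_mul_single_of_ne _ _ _ _ (Idx.ne_neg_comm.1 hik).symm,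
    single_mul_single_of_ne _ _ _ _ (Idx.neg_injective.ne hil), sub_zero]

theorem Xmat_mul_Xmat {i j k : Idx n} (hik : i ≠ k) (hij' : i ≠ Idx.neg j) (hjk' : j ≠ Idx.neg k)
    (a b : A) : D.Xmat i j a * D.Xmat j k b = single i k (a * b) := by
  simp only [Xmat, sub_mul, mul_sub, single_mul_single_same,
    single_mul_single_of_ne _ _ _ _ hjk',
    single_mul_single_of_ne _ _ _ _ (Idx.ne_neg_comm.1 hij').symm,
    single_mul_single_of_ne _ _ _ _ (Idx.neg_injective.ne hik), sub_zero]

theorem Xmat_mul_Xmat_swap {i j k : Idx n} (hik : i ≠ k) (hij' : i ≠ Idx.neg j)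
    (hjk' : j ≠ Idx.neg k) (a b : A) :
    D.Xmat j k b * D.Xmat i j a =
      single (Idx.neg k) (Idx.neg i) (D.lpow ((Idx.eps k - Idx.eps i) / 2) * D.bar (a * b)) := by
  simp only [Xmat, sub_mul, mul_sub, single_mul_single_same,
    single_mul_single_of_ne _ _ _ _ hik.symm, single_mul_single_of_ne _ _ _ _ hij'.symm,
    single_mul_single_of_ne _ _ _ _ (Idx.ne_neg_comm.1 hjk'), zero_sub, sub_zero, neg_neg,
    lpow_mul_bar_mul_lpow_mul_bar, Idx.half_eps_sub_add_half_eps_sub]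

theorem TS_self (i : Idx n) (a : A) : D.TS i i a = 1 := dif_pos rfl

theorem val_TS {i j : Idx n} (hij : i ≠ j) (a : A) :
    (D.TS i j a : Matrix (Idx n) (Idx n) A) = 1 + D.Xmat i j a := by
  rw [TS, dif_neg hij]

theorem TS_add (i j : Idx n) (a b : A) : D.TS i j (a + b) = D.TS i j a * D.TS i j b := by
  rcases eq_or_ne i j with rfl | hij
  · simp only [TS_self, mul_one]
  apply Units.ext
  simp only [Units.val_mul, D.val_TS hij, Xmat_add, mul_add, add_mul, one_mul, mul_one,
    D.Xmat_mul hij, add_zero]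
  abel

theorem TS_commute {i j k l : Idx n} (hil : i ≠ l) (hjk : j ≠ k) (hik' : i ≠ Idx.neg k)
    (hjl' : j ≠ Idx.neg l) (a b : A) : Commute (D.TS i j a) (D.TS k l b) := by
  rcases eq_or_ne i j with rfl | hij
  · simp only [TS_self, Commute.one_left]
  rcases eq_or_ne k l with rfl | hkl
  · simp only [TS_self, Commute.one_right]
  have hXY : D.Xmat i j a * D.Xmat k l b = 0 := D.Xmat_mul_Xmat_eq_zero hjk hil hjl' hik' a b
  have hYX : D.Xmat k l b * D.Xmat i j a = 0 :=
    D.Xmat_mul_Xmat_eq_zero hil.symm hjk.symm (Idx.ne_neg_comm.1 hjl') (Idx.ne_neg_comm.1 hik') b a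
  apply Units.ext
  simp only [Units.val_mul, D.val_TS hij, D.val_TS hkl, mul_add, add_mul, one_mul, mul_one, hXY,
    hYX]
  abel

theorem TS_commutator {i j k : Idx n} (hij : i ≠ j) (hjk : j ≠ k) (hik : i ≠ k)
    (hij' : i ≠ Idx.neg j) (hjk' : j ≠ Idx.neg k) (a b : A) :
    ⁅D.TS i j a, D.TS j k b⁆ = D.TS i k (a * b) := by
  have hXY : D.Xmat i j a * D.Xmat j k b =
      D.Xmat i k (a * b) + D.Xmat j k b * D.Xmat i j a := by
    rw [D.Xmat_mul_Xmat hik hij' hjk', D.Xmat_mul_Xmat_swap hik hij' hjk', Xmat, sub_add_cancel]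
  have hZY : D.Xmat i k (a * b) * D.Xmat j k b = 0 :=
    D.Xmat_mul_Xmat_eq_zero hjk.symm hik (Idx.neg_ne k).symm hij' _ _
  have hZX : D.Xmat i k (a * b) * D.Xmat i j a = 0 :=
    D.Xmat_mul_Xmat_eq_zero hik.symm hij (Idx.ne_neg_comm.1 hjk') (Idx.neg_ne i).symm _ _
  rw [commutatorElement_def, mul_inv_eq_iff_eq_mul, mul_inv_eq_iff_eq_mul]
  apply Units.ext
  simp only [Units.val_mul, D.val_TS hij, D.val_TS hjk, D.val_TS hik, mul_add, add_mul, one_mul,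
    mul_one, hXY, hZY, hZX, zero_mul]
  abel

theorem isSteinbergFamily_TS (s : Fin n → Bool) :
    IsSteinbergFamily fun p q : Fin n ↦ D.TS (p, s p) (q, s q) := by
  have hne {p q : Fin n} (hpq : p ≠ q) : (p, s p) ≠ (q, s q) := fun h ↦ hpq (congrArg Prod.fst h)
  have hneg := Idx.mk_ne_neg_mk s
  exact
    { diag := fun p ↦ D.TS_self _
      add := fun p q ↦ D.TS_add _ _
      commute := fun hps hqr ↦ D.TS_commute (hne hps) (hne hqr) (hneg _ _) (hneg _ _)
      commutator := fun hpq hqr hpr ↦ D.TS_commutator (hne hpq) (hne hqr) (hne hpr) (hneg _ _)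
        (hneg _ _) }

theorem unrelativeElementary_TS_le_FU (s : Fin n → Bool) (I : Ideal A) (Γ : AddSubgroup A) :
    unrelativeElementary (fun p q : Fin n ↦ D.TS (p, s p) (q, s q)) I ≤
      D.FU n I.toAddSubgroup Γ := by
  refine (Subgroup.closure_le _).2 ?_
  rintro _ ⟨p, q, c, hc, rfl⟩
  rcases eq_or_ne p q with rfl | hpq
  · simp only [TS_self, SetLike.mem_coe, one_mem]
  · exact Subgroup.subset_closure (Or.inl ⟨_, _, fun h ↦ hpq (congrArg Prod.fst h),
      Idx.mk_ne_neg_mk s p q, c, hc, rfl⟩)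

end FormRingData

/-- The two-sided ideal underlying a form ideal, as a left ideal of `A`. -/
def FormIdeal.toIdeal {A : Type*} [Ring A] {D : FormRingData A} (F : FormIdeal D) : Ideal A :=
  { F.I with smul_mem' := fun c _ hx ↦ F.mul_mem_left c _ hx }

instance FormIdeal.isTwoSided_toIdeal {A : Type*} [Ring A] {D : FormRingData A}
    (F : FormIdeal D) : F.toIdeal.IsTwoSided where
  mul_mem_of_left c hx := F.mul_mem_right c _ hx

theorem statement11_general {A : Type*} [Ring A] (D : FormRingData A) (n : ℕ) (hn : 3 ≤ n)
    (I J : Ideal A) [I.IsTwoSided] [J.IsTwoSided] (Γ Δ : AddSubgroup A) (i j : Idx n)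
    (hij : i ≠ j) (hij' : i ≠ Idx.neg j) (a : A) (ha : a ∈ I) (b : A) (hb : b ∈ J) (r : A) :
    ⁅D.TS j i a, D.TS i j r * D.TS j i b * D.TS i j (-r)⁆ ∈
      ⁅D.FU n I.toAddSubgroup Γ, D.FU n J.toAddSubgroup Δ⁆ := by
  have hne : i.1 ≠ j.1 := Idx.fst_ne_fst hij hij'
  obtain ⟨s, hsi, hsj⟩ : ∃ s : Fin n → Bool, s i.1 = i.2 ∧ s j.1 = j.2 :=
    ⟨Function.update (fun _ ↦ i.2) j.1 j.2, Function.update_of_ne hne _ _,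
      Function.update_self _ _ _⟩
  have h := D.isSteinbergFamily_TS s
  have hmem := Subgroup.commutator_mono (D.unrelativeElementary_TS_le_FU s I Γ)
    (D.unrelativeElementary_TS_le_FU s J Δ)
    (h.commutator_conj_mem (fun p q ↦ Fin.exists_ne_and_ne_of_two_lt p q hn) hne ha hb r)
  rw [MulAut.conj_apply, ← h.neg] at hmem
  simpa only [hsi, hsj] using hmem

/-- Lemma 8: `[T_{ji}(a), Z_{ji}(b,r)] ∈ [FU(2n,I,Γ), FU(2n,J,Δ)]` for short
root positions. -/
theorem statement11 {A : Type*} [Ring A] (D : FormRingData A) (n : ℕ) (hn : 3 ≤ n)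
    (FI FJ : FormIdeal D) (i j : Idx n) (hij : i ≠ j) (hij' : i ≠ Idx.neg j)
    (a : A) (ha : a ∈ FI.I) (b : A) (hb : b ∈ FJ.I) (r : A) :
    ⁅D.TS j i a, D.TS i j r * D.TS j i b * D.TS i j (-r)⁆ ∈
      ⁅D.FU n FI.I FI.Gamma, D.FU n FJ.I FJ.Gamma⁆ :=
  statement11_general D n hn FI.toIdeal FJ.toIdeal FI.Gamma FJ.Gamma i j hij hij' a ha b hb r
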